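/- arXiv:1510.02896 — 2 statements merged into one kernel-verified Lean document; each statement's English description precedes it below -/
import Mathlib

section
/- Let l > 0 and Λ ∈ ℝ, and let h, φ : (0, l) → ℝ be smooth strictly positive functions satisfying h''(s)/h(s) + (φ'(s)/φ(s))·(h'(s)/h(s)) + Λ + φ''(s)/φ(s) ≤ 0 for all s ∈ (0, l). Then for every smooth function f : ℝ → ℝ whose support is a compact subset of (0, l), writing u(s) = h'(s)/h(s) and v(s) = φ'(s)/φ(s), one has ∫₀ˡ [ (1/2)·(u(s)+v(s))²·f(s)² + (1/2)·(u(s)²+v(s)²)·f(s)² + Λ·f(s)² ] ds ≤ 2·∫₀ˡ f(s)·f'(s)·(u(s)+v(s)) ds. -/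
open MeasureTheory Set

/-- A product whose first factor is `C^n` on the whole line and supported in an open set `U` is `C^n`
as soon as the second factor is `C^n` on `U`. -/
theorem ContDiff.mul_contDiffOn_of_tsupport_subset {n : WithTop ℕ∞} {f g : ℝ → ℝ} {U : Set ℝ}
    (hU : IsOpen U) (hf : ContDiff ℝ n f) (hfU : tsupport f ⊆ U) (hg : ContDiffOn ℝ n g U) :
    ContDiff ℝ n fun x => f x * g x := by
  refine contDiff_iff_contDiffAt.2 fun x => ?_
  by_cases hx : x ∈ tsupport f
  · exact hf.contDiffAt.mul (hg.contDiffAt (hU.mem_nhds (hfU hx)))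
  · refine (contDiffAt_const (c := (0 : ℝ))).congr_of_eventuallyEq ?_
    filter_upwards [notMem_tsupport_iff_eventuallyEq.1 hx] with y hy
    simp [hy]

/-- The derivative of `g' / g`. -/
theorem ContDiffOn.hasDerivAt_logDeriv {g : ℝ → ℝ} {U : Set ℝ} (hU : IsOpen U)
    (hg : ContDiffOn ℝ 2 g U) {s : ℝ} (hs : s ∈ U) (h0 : g s ≠ 0) :
    HasDerivAt (fun x => deriv g x / g x) (deriv (deriv g) s / g s - (deriv g s / g s) ^ 2) s := by
  have h1 : HasDerivAt g (deriv g s) s :=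
    ((hg.contDiffAt (hU.mem_nhds hs)).differentiableAt (by norm_num)).hasDerivAt
  have h2 : HasDerivAt (deriv g) (deriv (deriv g) s) s :=
    (((hg.deriv_of_isOpen (m := 1) hU (by norm_num)).contDiffAt
      (hU.mem_nhds hs)).differentiableAt (by norm_num)).hasDerivAt
  refine (h2.div h1 h0).congr_deriv ?_
  field_simp

/-- Rearranged form of the integrated differential inequality in the proof of
Proposition 2.3: with `u = h'/h` and `v = φ'/φ`,
`∫₀ˡ [(1/2)(u+v)² f² + (1/2)(u²+v²) f² + Λ f²] ds ≤ 2 ∫₀ˡ f f' (u+v) ds`. -/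
theorem stmt_3 (l Λ : ℝ) (hl : 0 < l) (h φ : ℝ → ℝ)
    (hh : ContDiffOn ℝ (⊤ : ℕ∞) h (Set.Ioo 0 l)) (hφ : ContDiffOn ℝ (⊤ : ℕ∞) φ (Set.Ioo 0 l))
    (hhpos : ∀ s ∈ Set.Ioo 0 l, 0 < h s) (hφpos : ∀ s ∈ Set.Ioo 0 l, 0 < φ s)
    (hineq : ∀ s ∈ Set.Ioo 0 l,
      deriv (deriv h) s / h s + (deriv φ s / φ s) * (deriv h s / h s) + Λ
        + deriv (deriv φ) s / φ s ≤ 0)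
    (f : ℝ → ℝ) (hf : ContDiff ℝ (⊤ : ℕ∞) f)
    (hfc : HasCompactSupport f) (hfsupp : tsupport f ⊆ Set.Ioo 0 l)
    (u v : ℝ → ℝ)
    (hu : ∀ s, u s = deriv h s / h s) (hv : ∀ s, v s = deriv φ s / φ s) :
    (∫ s in (0:ℝ)..l,
        ((1 / 2) * (u s + v s) ^ 2 * f s ^ 2
          + (1 / 2) * (u s ^ 2 + v s ^ 2) * f s ^ 2
          + Λ * f s ^ 2)) ≤
      2 * ∫ s in (0:ℝ)..l, f s * deriv f s * (u s + v s) := by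
  have two_le : (2 : WithTop ℕ∞) ≤ ((⊤ : ℕ∞) : WithTop ℕ∞) :=
    WithTop.coe_le_coe.2 (le_top : (2 : ℕ∞) ≤ ⊤)
  have hh2 := hh.of_le two_le
  have hφ2 := hφ.of_le two_le
  have hf2 := hf.of_le two_le
  have hf1 : ContDiff ℝ 1 f := hf2.of_le (by norm_num)
  have hf0 : ContDiff ℝ 0 f := hf2.of_le (by norm_num)
  have hUo : IsOpen (Ioo 0 l) := isOpen_Ioo
  have huC : ContDiffOn ℝ 1 u (Ioo 0 l) := by
    rw [funext hu]
    exact (hh2.deriv_of_isOpen hUo (by norm_num)).div (hh2.of_le (by norm_num))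
      fun s hs => (hhpos s hs).ne'
  have hvC : ContDiffOn ℝ 1 v (Ioo 0 l) := by
    rw [funext hv]
    exact (hφ2.deriv_of_isOpen hUo (by norm_num)).div (hφ2.of_le (by norm_num))
      fun s hs => (hφpos s hs).ne'
  have hG : ContDiff ℝ 1 fun s => f s * (f s * (u s + v s)) :=
    hf1.mul_contDiffOn_of_tsupport_subset hUo hfsupp (hf1.contDiffOn.mul (huC.add hvC))
  have hR : Continuous fun s => f s * deriv f s * (u s + v s) := by
    simp_rw [mul_assoc]
    refine (hf0.mul_contDiffOn_of_tsupport_subset hUo hfsupp ?_).continuous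
    exact contDiffOn_zero.2 ((hf1.continuous_deriv le_rfl).continuousOn.mul
      (huC.continuousOn.add hvC.continuousOn))
  have hA : Continuous fun s => (1 / 2) * (u s + v s) ^ 2 * f s ^ 2
      + (1 / 2) * (u s ^ 2 + v s ^ 2) * f s ^ 2 + Λ * f s ^ 2 := by
    have hu0 := huC.continuousOn
    have hv0 := hvC.continuousOn
    have hfU := hf0.continuous.continuousOn (s := Ioo 0 l)
    have key := (hf0.mul_contDiffOn_of_tsupport_subset hUo hfsupp (contDiffOn_zero.2
      (show ContinuousOn (fun s => f s * ((1 / 2) * (u s + v s) ^ 2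
        + (1 / 2) * (u s ^ 2 + v s ^ 2) + Λ)) (Ioo 0 l) by fun_prop))).continuous
    convert key using 2 with s
    ring
  have hG' : Continuous (deriv fun s => f s * (f s * (u s + v s))) := hG.continuous_deriv le_rfl
  have hfz : ∀ s ∉ Ioo 0 l, f s = 0 := fun s hs =>
    image_eq_zero_of_notMem_tsupport fun hs' => hs (hfsupp hs')
  have hGint : ∫ s in (0:ℝ)..l, deriv (fun s => f s * (f s * (u s + v s))) s = 0 := by
    rw [intervalIntegral.integral_deriv_eq_sub
      (fun s _ => (hG.differentiable (by norm_num)) s) (hG'.intervalIntegrable _ _)]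
    simp [hfz 0 (by simp), hfz l (by simp)]
  have hR2 : 2 * ∫ s in (0:ℝ)..l, f s * deriv f s * (u s + v s) =
      ∫ s in (0:ℝ)..l, (2 * (f s * deriv f s * (u s + v s))
        - deriv (fun s => f s * (f s * (u s + v s))) s) := by
    rw [intervalIntegral.integral_sub ((hR.const_mul 2).intervalIntegrable _ _)
      (hG'.intervalIntegrable _ _), hGint, intervalIntegral.integral_const_mul, sub_zero]
  rw [hR2]
  refine intervalIntegral.integral_mono_on_of_le_Ioo hl.le (hA.intervalIntegrable _ _)
    (((hR.const_mul 2).sub hG').intervalIntegrable _ _) fun s hs => ?_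
  have hfd : HasDerivAt f (deriv f s) s := (hf1.differentiable (by norm_num) s).hasDerivAt
  have hud := hh2.hasDerivAt_logDeriv hUo hs (hhpos s hs).ne'
  have hvd := hφ2.hasDerivAt_logDeriv hUo hs (hφpos s hs).ne'
  rw [← funext hu, ← hu] at hud
  rw [← funext hv, ← hv] at hvd
  have hGd : deriv (fun s => f s * (f s * (u s + v s))) s = _ :=
    (hfd.mul (hfd.mul (hud.add hvd))).deriv
  have hi := hineq s hs
  rw [← hu, ← hv] at hi
  rw [hGd]
  simp only [Pi.mul_apply, Pi.add_apply]
  linear_combination f s ^ 2 * hi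
end

section
/- Let l > 0 and Λ ∈ ℝ, and let h, φ : (0, l) → ℝ be smooth strictly positive functions satisfying h''(s)/h(s) + (φ'(s)/φ(s))·(h'(s)/h(s)) + Λ + φ''(s)/φ(s) ≤ 0 for all s ∈ (0, l). Then for every smooth function f : ℝ → ℝ whose support is a compact subset of (0, l), one has Λ·∫₀ˡ f(s)² ds ≤ (3/2)·∫₀ˡ f'(s)² ds. -/
open MeasureTheory Set

/-- A function `w` with `w' + w ^ 2 / c + Λ ≤ 0` on `(a, b)` yields the Dirichlet form bound
`Λ ∫ f ^ 2 ≤ c ∫ (f') ^ 2` for every `C ^ 1` function `f` supported inside `(a, b)`. -/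
theorem mul_integral_sq_le_of_riccati {a b c Λ : ℝ} (hab : a ≤ b) (hc : 0 < c) {w w' : ℝ → ℝ}
    (hw : ∀ s ∈ Ioo a b, HasDerivAt w (w' s) s)
    (hric : ∀ s ∈ Ioo a b, w' s + w s ^ 2 / c + Λ ≤ 0)
    {f : ℝ → ℝ} (hf : ContDiff ℝ 1 f) (hfsupp : tsupport f ⊆ Ioo a b) :
    Λ * (∫ s in a..b, f s ^ 2) ≤ c * ∫ s in a..b, deriv f s ^ 2 := by
  have hf' : Continuous (deriv f) := hf.continuous_deriv le_rfl
  have hG : ∀ s ∈ Ioo a b, HasDerivAt (fun s => f s ^ 2 * w s)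
      (2 * f s * deriv f s * w s + f s ^ 2 * w' s) s := fun s hs => by
    simpa using ((hf.differentiable one_ne_zero s).hasDerivAt.fun_pow 2).fun_mul (hw s hs)
  have hGcont : Continuous fun s => f s ^ 2 * w s := by
    refine continuous_iff_continuousAt.2 fun s => ?_
    by_cases hs : s ∈ tsupport f
    · exact (hG s (hfsupp hs)).continuousAt
    · refine (continuousAt_const (y := (0 : ℝ))).congr ?_
      filter_upwards [notMem_tsupport_iff_eventuallyEq.1 hs] with t ht
      simp [ht]
  have hfa : f a = 0 := image_eq_zero_of_notMem_tsupport fun h => lt_irrefl _ (hfsupp h).1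
  have hfb : f b = 0 := image_eq_zero_of_notMem_tsupport fun h => lt_irrefl _ (hfsupp h).2
  have hint₁ : Continuous fun s => c * deriv f s ^ 2 := by fun_prop
  have hint₂ : Continuous fun s => Λ * f s ^ 2 := continuous_const.mul (hf.continuous.pow 2)
  have key := intervalIntegral.sub_le_integral_of_hasDeriv_right_of_le hab hGcont.continuousOn
    (fun s hs => (hG s hs).hasDerivWithinAt)
    (φ := fun s => c * deriv f s ^ 2 - Λ * f s ^ 2)
    ((hint₁.sub hint₂).continuousOn.integrableOn_Icc) fun s hs => by
      have hsq : 2 * f s * deriv f s * w s ≤ c * deriv f s ^ 2 + f s ^ 2 * (w s ^ 2 / c) := by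
        have h0 : 0 ≤ (c * deriv f s - f s * w s) ^ 2 / c := by positivity
        have h1 : (c * deriv f s - f s * w s) ^ 2 / c =
            c * deriv f s ^ 2 + f s ^ 2 * (w s ^ 2 / c) - 2 * f s * deriv f s * w s := by
          field_simp
          ring
        linarith
      have := mul_nonpos_of_nonneg_of_nonpos (sq_nonneg (f s)) (hric s hs)
      linarith
  rw [intervalIntegral.integral_sub (hint₁.intervalIntegrable _ _)
    (hint₂.intervalIntegrable _ _), intervalIntegral.integral_const_mul,
    intervalIntegral.integral_const_mul] at key
  simp only [hfa, hfb] at key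
  linarith

/-- The logarithmic derivative `g' / g` of a nonvanishing smooth function has derivative
`g'' / g - (g' / g) ^ 2`. -/
theorem hasDerivAt_deriv_div_self {g : ℝ → ℝ} {U : Set ℝ} {s : ℝ} (hU : IsOpen U) (hs : s ∈ U)
    (hg : ContDiffOn ℝ 2 g U) (hgs : g s ≠ 0) :
    HasDerivAt (fun t => deriv g t / g t) (deriv (deriv g) s / g s - (deriv g s / g s) ^ 2) s := by
  have hg₁ := ((hg.differentiableOn two_ne_zero).differentiableAt (hU.mem_nhds hs)).hasDerivAt
  have hg₂ := (((hg.deriv_of_isOpen hU (m := 1) (by norm_num)).differentiableOn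
    one_ne_zero).differentiableAt (hU.mem_nhds hs)).hasDerivAt
  refine (hg₂.fun_div hg₁ hgs).congr_deriv ?_
  field_simp

/-- Key spectral consequence in the proof of Proposition 2.3: under the
differential inequality for `h, φ` on `(0, l)`, every smooth test function `f`
supported in a compact subset of `(0, l)` satisfies
`Λ ∫₀ˡ f² ≤ (3/2) ∫₀ˡ (f')²`. -/
theorem stmt_4 (l Λ : ℝ) (hl : 0 < l) (h φ : ℝ → ℝ)
    (hh : ContDiffOn ℝ (⊤ : ℕ∞) h (Set.Ioo 0 l)) (hφ : ContDiffOn ℝ (⊤ : ℕ∞) φ (Set.Ioo 0 l))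
    (hhpos : ∀ s ∈ Set.Ioo 0 l, 0 < h s) (hφpos : ∀ s ∈ Set.Ioo 0 l, 0 < φ s)
    (hineq : ∀ s ∈ Set.Ioo 0 l,
      deriv (deriv h) s / h s + (deriv φ s / φ s) * (deriv h s / h s) + Λ
        + deriv (deriv φ) s / φ s ≤ 0)
    (f : ℝ → ℝ) (hf : ContDiff ℝ (⊤ : ℕ∞) f)
    (hfc : HasCompactSupport f) (hfsupp : tsupport f ⊆ Set.Ioo 0 l) :
    Λ * (∫ s in (0:ℝ)..l, f s ^ 2) ≤
      (3 / 2) * ∫ s in (0:ℝ)..l, (deriv f s) ^ 2 := by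
  have h2 : (2 : WithTop ℕ∞) ≤ ((⊤ : ℕ∞) : WithTop ℕ∞) :=
    WithTop.coe_le_coe.2 (le_top (a := (2 : ℕ∞)))
  refine mul_integral_sq_le_of_riccati hl.le (by norm_num)
    (fun s hs =>
      (hasDerivAt_deriv_div_self isOpen_Ioo hs (hh.of_le h2) (hhpos s hs).ne').add
        (hasDerivAt_deriv_div_self isOpen_Ioo hs (hφ.of_le h2) (hφpos s hs).ne'))
    (fun s hs => ?_) (hf.of_le (by exact_mod_cast le_top)) hfsupp
  have := hineq s hs
  simp only [Pi.add_apply]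
  nlinarith [sq_nonneg (deriv h s / h s + deriv φ s / φ s),
    sq_nonneg (deriv h s / h s - deriv φ s / φ s)]
end
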